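/- Let π and π* be two stationary policies for a finite entropy-regularized MDP in the undiscounted setting (γ = 1). Under the same absolute-summability hypotheses—(i) V^π(s) = E[ Σ_{t=0}^∞ ( r(s_t,a_t) + ε h^π_{s_t} ) | s_0 = s ] is well-defined (absolutely convergent) for every s; (ii) under trajectories from π*, E[ Σ_{t=0}^∞ ( |r(s_t,a_t)| + ε h^π_{s_t} ) ] < ∞ and under trajectories from π, E[ Σ_{t=0}^∞ ( |r(s_t,a_t)| + ε h^π_{s_t} ) ] < ∞; and (iii) E_{τ∼π*}[ V^π(s_T) ] → 0 as T → ∞—the expected total rewards satisfy: E_{τ∼π}[ Σ_{t=0}^∞ r(s_t,a_t) ] = E_{τ∼π*}[ Σ_{t=0}^∞ r(s_t,a_t) ] − ( E_{τ∼π*}[ Σ_{t=0}^∞ A^π(s_t,a_t) ] + E_{τ∼π}[ Σ_{t=0}^∞ ε h^π_{s_t} ] ). -/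

import Mathlib

/-!
Write `v t = E_{π*}[V^π(s_t)]`.  Since `A^π = r + P V^π - V^π`, the expected advantage at time `t`
under `π*` is `E_{π*}[r(s_t, a_t)] + v (t + 1) - v t` (`expAt_adv`), so its sum over `t` is
`E_{π*}[∑ r] - v 0` by telescoping and `v t → 0`.  Conditioning on the initial state
(`expAt_eq_sum_dirac`) gives `v 0 = E_μ[V^π] = E_π[∑ r] + E_π[∑ ε h^π]`, which is the identity.

As `∑'` over `ℕ` is junk unless the series converges absolutely, telescoping along `v t → 0` is not
enough: `v` itself has to be summable.  It is, because `v t` is a linear functional of the `t`-th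
iterate of a linear map on `S → ℝ` (`summable_observable_of_tendsto_zero`).  Its shifts
span a finite-dimensional space of null sequences, on which the shift has iterates tending to `0`
pointwise for the sup norm, hence in operator norm, hence summably
(`summable_norm_pow_apply`, `summable_of_mem_shiftInvariant`).
-/

open scoped BigOperators

/-- `p` is a probability distribution on the finite type `α`. -/
def IsProb {α : Type*} [Fintype α] (p : α → ℝ) : Prop :=
  (∀ x, 0 ≤ p x) ∧ ∑ x, p x = 1

/-- Shannon entropy of a finite distribution.  The convention `0 * log 0 = 0`
holds automatically since `Real.log 0 = 0`. -/
noncomputable def entropy {α : Type*} [Fintype α] (p : α → ℝ) : ℝ :=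
  -∑ x, p x * Real.log (p x)

/-- Distribution of the state `s_t` at time `t` of a trajectory generated by
the stationary policy `π` in the MDP with transition kernel `P`, started from
the initial state distribution `μ`. -/
noncomputable def stateDist {S A : Type*} [Fintype S] [Fintype A]
    (P : S → A → S → ℝ) (π : S → A → ℝ) (μ : S → ℝ) : ℕ → S → ℝ
  | 0 => μ
  | t + 1 => fun s' => ∑ s, ∑ a, stateDist P π μ t s * π s a * P s a s'

/-- `E_{τ ∼ π}[ g (s_t, a_t) ]` for a trajectory generated by the stationary
policy `π` (with transition kernel `P`), started from `s₀ ∼ μ`. -/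
noncomputable def expAt {S A : Type*} [Fintype S] [Fintype A]
    (P : S → A → S → ℝ) (π : S → A → ℝ) (μ : S → ℝ) (t : ℕ) (g : S → A → ℝ) : ℝ :=
  ∑ s, stateDist P π μ t s * ∑ a, π s a * g s a

/-- The Dirac distribution concentrated at the state `s`. -/
def dirac {S : Type*} [DecidableEq S] (s : S) : S → ℝ :=
  fun s' => if s' = s then 1 else 0

/-- Entropy-regularized (`γ`-discounted) value function:
`V^π(s) = E[ ∑ₜ γ^t (r(s_t,a_t) + ε h^π_{s_t}) | s₀ = s ]`. -/
noncomputable def valueV {S A : Type*} [Fintype S] [Fintype A] [DecidableEq S]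
    (P : S → A → S → ℝ) (r : S → A → ℝ) (π : S → A → ℝ) (ε γ : ℝ) (s : S) : ℝ :=
  ∑' t : ℕ, γ ^ t * expAt P π (dirac s) t (fun s' a => r s' a + ε * entropy (π s'))

/-- Entropy-regularized Q-function: `Q^π(s,a) = r(s,a) + γ E_{s' ∼ P(·|s,a)}[V^π(s')]`. -/
noncomputable def valueQ {S A : Type*} [Fintype S] [Fintype A] [DecidableEq S]
    (P : S → A → S → ℝ) (r : S → A → ℝ) (π : S → A → ℝ) (ε γ : ℝ) (s : S) (a : A) : ℝ :=
  r s a + γ * ∑ s', P s a s' * valueV P r π ε γ s'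

/-- Advantage function `A^π(s,a) = Q^π(s,a) - V^π(s)`. -/
noncomputable def adv {S A : Type*} [Fintype S] [Fintype A] [DecidableEq S]
    (P : S → A → S → ℝ) (r : S → A → ℝ) (π : S → A → ℝ) (ε γ : ℝ) (s : S) (a : A) : ℝ :=
  valueQ P r π ε γ s a - valueV P r π ε γ s

/-- In finite dimension, if the iterates of a linear map tend to `0` at every vector, they do so in
operator norm, so some iterate is a strict contraction and the orbits are absolutely summable. -/
lemma summable_norm_pow_apply {E : Type*} [NormedAddCommGroup E] [NormedSpace ℝ E]
    [FiniteDimensional ℝ E] (T₀ : E →ₗ[ℝ] E)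
    (hpt : ∀ x : E, ∀ δ > 0, ∀ᶠ n : ℕ in Filter.atTop, ‖(T₀ ^ n) x‖ ≤ δ) (x : E) :
    Summable (fun n : ℕ => ‖(T₀ ^ n) x‖) := by
  let T : E →L[ℝ] E := LinearMap.toContinuousLinearMap T₀
  have hT : ∀ n y, (T ^ n) y = (T₀ ^ n) y := by
    intro n
    induction n with
    | zero => intro y; rfl
    | succ n ih =>
      intro y
      rw [pow_succ, pow_succ, mul_apply_eq_comp, Module.End.mul_apply, ih]
      rfl
  obtain ⟨N, hN⟩ : ∃ N, ‖T ^ N‖ ≤ 1 / 2 := by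
    obtain ⟨C, hC, hb⟩ := (Module.finBasis ℝ E).exists_opNorm_le (F := E)
    have : ∀ᶠ n in Filter.atTop, ∀ i, ‖(T ^ n) (Module.finBasis ℝ E i)‖ ≤ 1 / (2 * C) :=
      Filter.eventually_all.2 fun i => by
        simp only [hT]
        exact hpt _ _ (by positivity)
    obtain ⟨N, h⟩ := this.exists
    refine ⟨N, (hb (by positivity) h).trans (le_of_eq ?_)⟩
    field_simp
  -- the partial sums `s M` satisfy `s M ≤ s (N + M) ≤ s N + s M / 2`
  have hsum : Summable (fun n => ‖T ^ n‖) := by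
    refine summable_of_sum_range_le (c := 2 * ∑ n ∈ Finset.range N, ‖T ^ n‖)
      (fun _ => norm_nonneg _) fun M => ?_
    have h1 := Finset.sum_range_add (fun n => ‖T ^ n‖) N M
    have h2 : ∑ n ∈ Finset.range M, ‖T ^ (N + n)‖ ≤ 1 / 2 * ∑ n ∈ Finset.range M, ‖T ^ n‖ := by
      rw [Finset.mul_sum]
      refine Finset.sum_le_sum fun n _ => ?_
      rw [pow_add]
      exact (norm_mul_le _ _).trans (by gcongr)
    have h3 : ∑ n ∈ Finset.range M, ‖T ^ n‖ ≤ ∑ n ∈ Finset.range (N + M), ‖T ^ n‖ :=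
      Finset.sum_le_sum_of_subset_of_nonneg
        (Finset.range_mono (by omega)) fun _ _ _ => norm_nonneg _
    linarith
  refine Summable.of_nonneg_of_le (fun _ => norm_nonneg _) (fun n => ?_) (hsum.mul_right ‖x‖)
  rw [← hT]
  exact (T ^ n).le_opNorm x

open scoped ZeroAtInfty in
/-- A finite-dimensional shift-invariant space of null sequences consists of absolutely summable
sequences: in the sup norm the iterates of the shift tend to `0` at every vector of the space. -/
lemma summable_of_mem_shiftInvariant (X : Submodule ℝ C₀(ℕ, ℝ)) [FiniteDimensional ℝ X]
    (hX : ∀ x ∈ X, ∃ y ∈ X, ∀ t, y t = x (t + 1)) (u : C₀(ℕ, ℝ)) (hu : u ∈ X) :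
    Summable (fun t => u t) := by
  have hX' : ∀ x : X, ∃ y : X, ∀ t, (y : C₀(ℕ, ℝ)) t = (x : C₀(ℕ, ℝ)) (t + 1) := by
    rintro ⟨x, hx⟩
    obtain ⟨y, hy, h⟩ := hX x hx
    exact ⟨⟨y, hy⟩, h⟩
  choose f hf using hX'
  let T : X →ₗ[ℝ] X :=
    { toFun := f
      map_add' := fun x y => by
        ext t
        simp [hf]
      map_smul' := fun c x => by
        ext t
        simp [hf] }
  have hT : ∀ n (x : X) t, ((T ^ n) x : C₀(ℕ, ℝ)) t = (x : C₀(ℕ, ℝ)) (t + n) := by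
    intro n
    induction n with
    | zero => intro x t; simp
    | succ n ih =>
      intro x t
      rw [pow_succ, Module.End.mul_apply, ih]
      exact (hf x (t + n)).trans (by congr 1)
  have hnorm : ∀ (x : C₀(ℕ, ℝ)) t, |x t| ≤ ‖x‖ := fun x t => by
    simpa using x.toBCF.norm_coe_le_norm t
  have hle : ∀ (x : C₀(ℕ, ℝ)) (c : ℝ), 0 ≤ c → (∀ t, |x t| ≤ c) → ‖x‖ ≤ c := fun x c hc h => by
    rw [← ZeroAtInftyContinuousMap.norm_toBCF_eq_norm]
    exact (BoundedContinuousFunction.norm_le hc).2 h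
  have hpt : ∀ x : X, ∀ δ > 0, ∀ᶠ n : ℕ in Filter.atTop, ‖(T ^ n) x‖ ≤ δ := by
    intro x δ hδ
    have h0 : Filter.Tendsto (fun t => (x : C₀(ℕ, ℝ)) t) Filter.atTop (nhds 0) := by
      have := (x : C₀(ℕ, ℝ)).zero_at_infty'
      rwa [Filter.cocompact_eq_cofinite, Nat.cofinite_eq_atTop] at this
    obtain ⟨N, hN⟩ := (Metric.tendsto_atTop.1 h0) δ hδ
    filter_upwards [Filter.eventually_ge_atTop N] with n hn
    refine hle _ _ hδ.le fun t => ?_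
    change |((T ^ n) x : C₀(ℕ, ℝ)) t| ≤ δ
    rw [hT]
    have := hN (t + n) (by omega)
    rw [Real.dist_0_eq_abs] at this
    exact this.le
  refine Summable.of_norm_bounded (summable_norm_pow_apply (E := X) T hpt ⟨u, hu⟩) fun t => ?_
  have h1 := hT t ⟨u, hu⟩ 0
  rw [zero_add] at h1
  rw [Real.norm_eq_abs]
  change |(⟨u, hu⟩ : X).1 t| ≤ _
  rw [← h1]
  exact hnorm _ 0

open scoped ZeroAtInfty in
/-- A scalar observable of a finite-dimensional linear dynamical system that tends to `0` is
summable: its shifts span a finite-dimensional space of null sequences. -/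
lemma summable_observable_of_tendsto_zero {E : Type*} [AddCommGroup E] [Module ℝ E]
    [FiniteDimensional ℝ E] (M : E →ₗ[ℝ] E) (φ : E →ₗ[ℝ] ℝ) (v : E)
    (h : Filter.Tendsto (fun t : ℕ => φ ((M ^ t) v)) Filter.atTop (nhds 0)) :
    Summable (fun t : ℕ => φ ((M ^ t) v)) := by
  let O : E →ₗ[ℝ] (ℕ → ℝ) := LinearMap.pi fun t => φ ∘ₗ (M ^ t)
  let c : C₀(ℕ, ℝ) →ₗ[ℝ] (ℕ → ℝ) :=
    { toFun := fun x => x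
      map_add' := fun _ _ => rfl
      map_smul' := fun _ _ => rfl }
  let X : Submodule ℝ C₀(ℕ, ℝ) := (LinearMap.range O).comap c
  have hc : Function.Injective c := DFunLike.coe_injective
  have : FiniteDimensional ℝ X := by
    let g : X →ₗ[ℝ] LinearMap.range O := (c.domRestrict X).codRestrict _ fun x => x.2
    refine FiniteDimensional.of_injective g fun x y hxy => ?_
    exact Subtype.ext (hc (congrArg Subtype.val hxy))
  let u : C₀(ℕ, ℝ) :=
    { toFun := fun t => φ ((M ^ t) v)
      continuous_toFun := continuous_of_discreteTopology
      zero_at_infty' := by rw [Filter.cocompact_eq_cofinite, Nat.cofinite_eq_atTop]; exact h }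
  refine summable_of_mem_shiftInvariant X ?_ u ⟨v, rfl⟩
  rintro x ⟨w, hw⟩
  have hw' : ∀ t, φ ((M ^ t) w) = x t := fun t => congrFun hw t
  refine ⟨{ toFun := fun t => x (t + 1)
            continuous_toFun := continuous_of_discreteTopology
            zero_at_infty' := ?_ }, ⟨M w, ?_⟩, fun t => rfl⟩
  · have h0 := x.zero_at_infty'
    rw [Filter.cocompact_eq_cofinite, Nat.cofinite_eq_atTop] at h0 ⊢
    exact h0.comp (Filter.tendsto_add_atTop_nat 1)
  · funext t
    change φ ((M ^ t) (M w)) = x (t + 1)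
    rw [← hw', pow_succ]
    rfl

section MDP

variable {S A : Type*} [Fintype S] [Fintype A]

/-- One step of the Markov chain induced by `π`, as a linear operator on (signed) state
distributions. -/
noncomputable def stepMap (P : S → A → S → ℝ) (π : S → A → ℝ) : (S → ℝ) →ₗ[ℝ] (S → ℝ) where
  toFun ν := fun s' => ∑ s, ∑ a, ν s * π s a * P s a s'
  map_add' ν ν' := by
    funext s'
    simp [add_mul, Finset.sum_add_distrib]
  map_smul' c ν := by
    funext s'
    simp [Finset.mul_sum, mul_assoc]

lemma stateDist_eq_pow (P : S → A → S → ℝ) (π : S → A → ℝ) (μ : S → ℝ) (t : ℕ) :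
    stateDist P π μ t = (stepMap P π ^ t) μ := by
  induction t with
  | zero => rfl
  | succ t ih =>
    rw [pow_succ', Module.End.mul_apply, ← ih]
    rfl

lemma stateDist_nonneg (P : S → A → S → ℝ) (π : S → A → ℝ) (μ : S → ℝ)
    (hP : ∀ s a, IsProb (P s a)) (hπ : ∀ s, IsProb (π s)) (hμ : ∀ s, 0 ≤ μ s) (t : ℕ) (s : S) :
    0 ≤ stateDist P π μ t s := by
  induction t generalizing s with
  | zero => exact hμ s
  | succ t ih =>
    exact Finset.sum_nonneg fun s' _ => Finset.sum_nonneg fun a _ =>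
      mul_nonneg (mul_nonneg (ih s') ((hπ s').1 a)) ((hP s' a).1 s)

lemma entropy_nonneg {p : A → ℝ} (hp : IsProb p) : 0 ≤ entropy p := by
  unfold entropy
  rw [neg_nonneg]
  refine Finset.sum_nonpos fun x _ => mul_nonpos_of_nonneg_of_nonpos (hp.1 x) ?_
  refine Real.log_nonpos (hp.1 x) ?_
  rw [← hp.2]
  exact Finset.single_le_sum (fun i _ => hp.1 i) (Finset.mem_univ x)

lemma expAt_add (P : S → A → S → ℝ) (π : S → A → ℝ) (μ : S → ℝ) (t : ℕ) (g k : S → A → ℝ) :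
    expAt P π μ t (fun s a => g s a + k s a) = expAt P π μ t g + expAt P π μ t k := by
  simp [expAt, mul_add, Finset.sum_add_distrib]

lemma abs_expAt_le (P : S → A → S → ℝ) (π : S → A → ℝ) (μ : S → ℝ)
    (hP : ∀ s a, IsProb (P s a)) (hπ : ∀ s, IsProb (π s)) (hμ : ∀ s, 0 ≤ μ s) (t : ℕ)
    (g G : S → A → ℝ) (h : ∀ s a, |g s a| ≤ G s a) :
    |expAt P π μ t g| ≤ expAt P π μ t G := by
  refine (Finset.abs_sum_le_sum_abs _ _).trans (Finset.sum_le_sum fun s _ => ?_)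
  have hd := stateDist_nonneg P π μ hP hπ hμ t s
  rw [abs_mul, abs_of_nonneg hd]
  refine mul_le_mul_of_nonneg_left ?_ hd
  refine (Finset.abs_sum_le_sum_abs _ _).trans (Finset.sum_le_sum fun a _ => ?_)
  rw [abs_mul, abs_of_nonneg ((hπ s).1 a)]
  exact mul_le_mul_of_nonneg_left (h s a) ((hπ s).1 a)

lemma summable_expAt_of_le (P : S → A → S → ℝ) (π : S → A → ℝ) (μ : S → ℝ)
    (hP : ∀ s a, IsProb (P s a)) (hπ : ∀ s, IsProb (π s)) (hμ : ∀ s, 0 ≤ μ s)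
    (g G : S → A → ℝ) (h : ∀ s a, |g s a| ≤ G s a)
    (hG : Summable (fun t => expAt P π μ t G)) : Summable (fun t => expAt P π μ t g) :=
  Summable.of_norm_bounded hG fun t => abs_expAt_le P π μ hP hπ hμ t g G h

/-- Conditioning on the initial state. -/
lemma expAt_eq_sum_dirac [DecidableEq S] (P : S → A → S → ℝ) (π : S → A → ℝ) (μ : S → ℝ) (t : ℕ)
    (g : S → A → ℝ) : expAt P π μ t g = ∑ s, μ s * expAt P π (dirac s) t g := by
  have hμ : μ = ∑ s, μ s • dirac s := by
    funext s'
    simp [dirac]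
  have h : stateDist P π μ t = ∑ s, μ s • stateDist P π (dirac s) t := by
    simp only [stateDist_eq_pow]
    conv_lhs => rw [hμ]
    simp
  simp only [expAt, h, Finset.sum_apply, Pi.smul_apply, smul_eq_mul, Finset.sum_mul, mul_assoc]
  rw [Finset.sum_comm]
  simp only [Finset.mul_sum]

/-- The expected advantage at time `t` is the expected reward plus an increment of
`t ↦ E[V^π(s_t)]`. -/
lemma expAt_adv [DecidableEq S] (P : S → A → S → ℝ) (r : S → A → ℝ) (μ : S → ℝ)
    (π ρ : S → A → ℝ) (ε : ℝ) (hρ : ∀ s, IsProb (ρ s)) (t : ℕ) :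
    expAt P ρ μ t (fun s a => adv P r π ε 1 s a) = expAt P ρ μ t r +
      (∑ s, stateDist P ρ μ (t + 1) s * valueV P r π ε 1 s -
        ∑ s, stateDist P ρ μ t s * valueV P r π ε 1 s) := by
  set V := valueV P r π ε 1 with hV
  have h1 : ∑ s', stateDist P ρ μ (t + 1) s' * V s' =
      ∑ s, stateDist P ρ μ t s * ∑ a, ρ s a * ∑ s', P s a s' * V s' := by
    simp only [stateDist, Finset.sum_mul, Finset.mul_sum]
    rw [Finset.sum_comm]
    refine Finset.sum_congr rfl fun s _ => ?_
    rw [Finset.sum_comm]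
    refine Finset.sum_congr rfl fun a _ => Finset.sum_congr rfl fun s' _ => ?_
    ring
  rw [h1, ← Finset.sum_sub_distrib]
  unfold expAt
  rw [← Finset.sum_add_distrib]
  refine Finset.sum_congr rfl fun s _ => ?_
  have h2 : V s = ∑ a, ρ s a * V s := by rw [← Finset.sum_mul, (hρ s).2, one_mul]
  have h3 : ∑ a, ρ s a * adv P r π ε 1 s a =
      ∑ a, ρ s a * r s a + ∑ a, ρ s a * ∑ s', P s a s' * V s' - V s := by
    conv_rhs => rw [h2]
    rw [← Finset.sum_add_distrib, ← Finset.sum_sub_distrib]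
    refine Finset.sum_congr rfl fun a _ => ?_
    simp only [adv, valueQ, ← hV]
    ring
  rw [h3]
  ring

end MDP

/-- **Reward-difference identity, undiscounted case (γ = 1)**.  Under the
absolute-summability hypotheses — (i) the series defining `V^π(s)` converges
absolutely for every `s`; (ii) under trajectories from `π*` and from `π`,
`E[∑ₜ (|r| + ε h^π)] < ∞`; and (iii) `E_{τ∼π*}[V^π(s_T)] → 0` as `T → ∞` — the
expected total rewards satisfy
`E_{τ∼π}[∑ r] = E_{τ∼π*}[∑ r] − ( E_{τ∼π*}[∑ A^π] + E_{τ∼π}[∑ ε h^π] )`. -/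
theorem reward_diff_undiscounted {S A : Type*} [Fintype S] [Fintype A] [DecidableEq S]
    [Nonempty S] [Nonempty A]
    (P : S → A → S → ℝ) (r : S → A → ℝ) (μ : S → ℝ) (π πstar : S → A → ℝ) (ε : ℝ)
    (hP : ∀ s a, IsProb (P s a)) (hπ : ∀ s, IsProb (π s)) (hπstar : ∀ s, IsProb (πstar s))
    (hμ : IsProb μ) (hε : 0 < ε)
    (hV : ∀ s : S, Summable (fun t : ℕ =>
      expAt P π (dirac s) t (fun s' a => |r s' a| + ε * entropy (π s'))))
    (hstar : Summable (fun t : ℕ =>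
      expAt P πstar μ t (fun s a => |r s a| + ε * entropy (π s))))
    (hself : Summable (fun t : ℕ =>
      expAt P π μ t (fun s a => |r s a| + ε * entropy (π s))))
    (htail : Filter.Tendsto
      (fun T : ℕ => ∑ s, stateDist P πstar μ T s * valueV P r π ε 1 s)
      Filter.atTop (nhds 0)) :
    ∑' t : ℕ, expAt P π μ t r =
      (∑' t : ℕ, expAt P πstar μ t r) -
        ((∑' t : ℕ, expAt P πstar μ t (fun s a => adv P r π ε 1 s a)) +
          ∑' t : ℕ, expAt P π μ t (fun s _ => ε * entropy (π s))) := by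
  have hent : ∀ s, 0 ≤ ε * entropy (π s) := fun s => mul_nonneg hε.le (entropy_nonneg (hπ s))
  have hdom : ∀ s a, |r s a| ≤ |r s a| + ε * entropy (π s) := fun s a => by linarith [hent s]
  have hdomf : ∀ s a, |r s a + ε * entropy (π s)| ≤ |r s a| + ε * entropy (π s) := fun s a =>
    (abs_add_le _ _).trans (by rw [abs_of_nonneg (hent s)])
  have hr_star := summable_expAt_of_le P πstar μ hP hπstar hμ.1 r _ hdom hstar
  have hr_self := summable_expAt_of_le P π μ hP hπ hμ.1 r _ hdom hself
  have he_self : Summable fun t => expAt P π μ t (fun s _ => ε * entropy (π s)) :=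
    summable_expAt_of_le P π μ hP hπ hμ.1 _ _
      (fun s a => by rw [abs_of_nonneg (hent s)]; linarith [abs_nonneg (r s a)]) hself
  -- the mean value of `V^π` under `μ` is the expected regularized return of `π`
  have hμV : ∑ s, μ s * valueV P r π ε 1 s =
      ∑' t, expAt P π μ t r + ∑' t, expAt P π μ t (fun s _ => ε * entropy (π s)) := by
    rw [← hr_self.tsum_add he_self]
    simp only [← expAt_add]
    have hs : ∀ s, Summable fun t =>
        expAt P π (dirac s) t (fun s' a => r s' a + ε * entropy (π s')) := fun s =>
      summable_expAt_of_le P π (dirac s) hP hπ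
        (fun s' => by unfold dirac; split_ifs <;> norm_num) _ _ hdomf (hV s)
    simp only [expAt_eq_sum_dirac P π μ]
    rw [Summable.tsum_finsetSum fun s _ => (hs s).mul_left _]
    refine Finset.sum_congr rfl fun s _ => ?_
    rw [tsum_mul_left]
    simp [valueV]
  set v : ℕ → ℝ := fun t => ∑ s, stateDist P πstar μ t s * valueV P r π ε 1 s with hv
  have hv_sum : Summable v := by
    let φ : (S → ℝ) →ₗ[ℝ] ℝ :=
      { toFun := fun ν => ∑ s, ν s * valueV P r π ε 1 s
        map_add' := fun _ _ => by simp [add_mul, Finset.sum_add_distrib]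
        map_smul' := fun _ _ => by simp [Finset.mul_sum, mul_assoc] }
    have hvφ : v = fun t => φ ((stepMap P πstar ^ t) μ) := by
      funext t
      rw [← stateDist_eq_pow]
      rfl
    rw [hvφ] at htail ⊢
    exact summable_observable_of_tendsto_zero _ φ μ htail
  have hv_succ : Summable fun t => v (t + 1) := (summable_nat_add_iff 1).2 hv_sum
  have hadv : ∑' t, expAt P πstar μ t (fun s a => adv P r π ε 1 s a) =
      ∑' t, expAt P πstar μ t r - v 0 := by
    have : ∀ t, expAt P πstar μ t (fun s a => adv P r π ε 1 s a) =
        expAt P πstar μ t r + (v (t + 1) - v t) := expAt_adv P r μ π πstar ε hπstar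
    simp only [this]
    rw [hr_star.tsum_add (hv_succ.sub hv_sum), hv_succ.tsum_sub hv_sum, hv_sum.tsum_eq_zero_add]
    ring
  have hv0 : v 0 = ∑ s, μ s * valueV P r π ε 1 s := rfl
  rw [hadv, hv0, hμV]
  ring
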